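/- arXiv:math/0610198 — 2 statements merged into one kernel-verified Lean document; each statement's English description precedes it below -/
import Mathlib

section
/- For all h > 0 and σ > 0, the regularized Shannon kernel δ is twice differentiable at 0 with δ'(0) = 0 and δ''(0) = −(3 + (π²/h²)·σ²)/(3σ²). -/
open Real

/-- The regularized Shannon kernel (RSK) with grid spacing `h` and Gaussian width `σ`. -/
noncomputable def rsk (h σ : ℝ) : ℝ → ℝ := fun y =>
  if y = 0 then 1
  else Real.sin (Real.pi * y / h) / (Real.pi / h * y) * Real.exp (-(y ^ 2) / (2 * σ ^ 2))

lemma hasDerivAt_of_quad (f : ℝ → ℝ) (a : ℝ)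
    (H : ∀ x : ℝ, |x| ≤ 1 → |f x - f 0 - x * a| ≤ x ^ 2) : HasDerivAt f a 0 := by
  rw [hasDerivAt_iff_isLittleO]
  have h1 : (fun x : ℝ => f x - f 0 - (x - 0) • a) =O[nhds 0] (fun x : ℝ => x ^ 2) := by
    apply Asymptotics.IsBigO.of_bound 1
    filter_upwards [Metric.ball_mem_nhds (0 : ℝ) one_pos] with x hx
    have hx' : |x| ≤ 1 := by
      have := Metric.mem_ball.1 hx
      rw [Real.dist_eq, sub_zero] at this
      exact this.le
    have := H x hx'
    simpa using this
  refine h1.trans_isLittleO ?_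
  have := Asymptotics.isLittleO_pow_pow (𝕜 := ℝ) (m := 1) (n := 2) one_lt_two
  simpa using this

/-- Derivative of `sinc`. -/
noncomputable def dsinc (x : ℝ) : ℝ := (x * Real.cos x - Real.sin x) / x ^ 2

lemma hasDerivAt_sinc (x : ℝ) : HasDerivAt Real.sinc (dsinc x) x := by
  rcases eq_or_ne x 0 with rfl | hx
  · have h0 : dsinc 0 = 0 := by simp [dsinc]
    rw [h0]
    apply hasDerivAt_of_quad
    intro x hx1
    rcases eq_or_ne x 0 with rfl | hx
    · simp
    have hb := Real.sin_bound hx1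
    have hxp : 0 < |x| := abs_pos.2 hx
    have e : Real.sinc x - Real.sinc 0 - x * 0 = (Real.sin x - x) / x := by
      rw [Real.sinc_of_ne_zero hx, Real.sinc_zero]; field_simp; ring
    rw [e, abs_div, div_le_iff₀ hxp]
    have h2 : |Real.sin x - x| ≤ |x| ^ 5 / 100 + |x| ^ 3 / 6 := by
      have : Real.sin x - x = (Real.sin x - (x - x ^ 3 / 6)) + (-(x ^ 3 / 6)) := by ring
      rw [this]
      refine (abs_add_le _ _).trans (add_le_add hb ?_)
      rw [abs_neg, abs_div, abs_pow]; norm_num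
    rw [← sq_abs x]
    have h4 : |x| ^ 5 ≤ |x| ^ 3 := pow_le_pow_of_le_one hxp.le hx1 (by norm_num)
    have : 0 < |x| ^ 3 := by positivity
    nlinarith
  · have h1 := (Real.hasDerivAt_sin x).div (hasDerivAt_id x) hx
    have h2 : HasDerivAt (fun y => Real.sin y / y) (dsinc x) x := by
      refine HasDerivAt.congr_deriv (f := fun y => Real.sin y / y) h1 ?_
      simp only [dsinc, id]; ring
    refine h2.congr_of_eventuallyEq ?_
    filter_upwards [isOpen_ne.mem_nhds hx] with y hy
    exact Real.sinc_of_ne_zero hy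

lemma hasDerivAt_dsinc : HasDerivAt dsinc (-1 / 3) 0 := by
  apply hasDerivAt_of_quad
  intro x hx1
  rcases eq_or_ne x 0 with rfl | hx
  · simp
  have hxp : 0 < |x| := abs_pos.2 hx
  have hs := Real.sin_bound hx1
  have hc := Real.cos_bound hx1
  have e : dsinc x - dsinc 0 - x * (-1 / 3) =
      (x * (Real.cos x - (1 - x ^ 2 / 2)) - (Real.sin x - (x - x ^ 3 / 6))) / x ^ 2 := by
    simp only [dsinc]; field_simp; simp; ring
  rw [e, abs_div, abs_of_nonneg (sq_nonneg x), div_le_iff₀ (by positivity)]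
  refine (abs_sub _ _).trans ?_
  rw [abs_mul]
  have h5 : |x| * |Real.cos x - (1 - x ^ 2 / 2)| ≤ 1 * (|x| ^ 4 * (5 / 96)) := by gcongr
  have h4 : x ^ 2 * x ^ 2 = |x| ^ 4 := by rw [← sq_abs x]; ring
  rw [h4]
  have : 0 < |x| ^ 4 := by positivity
  have h6 : |x| ^ 5 ≤ |x| ^ 4 := pow_le_pow_of_le_one hxp.le hx1 (by norm_num)
  linarith

lemma rsk_eq (h σ : ℝ) (hh : 0 < h) :
    rsk h σ = fun y => Real.sinc (Real.pi / h * y) * Real.exp (-(y ^ 2) / (2 * σ ^ 2)) := by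
  funext y
  rcases eq_or_ne y 0 with rfl | hy
  · simp [rsk]
  · have : Real.pi / h * y ≠ 0 := by have := Real.pi_pos; positivity
    simp only [rsk, if_neg hy, Real.sinc_of_ne_zero this]
    congr 3; ring

/-- For `h > 0` and `σ > 0`, the RSK is twice differentiable at `0` with
`δ'(0) = 0` and `δ''(0) = -(3 + (π²/h²)·σ²)/(3σ²)`. -/
theorem stmt_2 (h σ : ℝ) (hh : 0 < h) (hσ : 0 < σ) :
    HasDerivAt (rsk h σ) 0 0 ∧
      HasDerivAt (deriv (rsk h σ))
        (-(3 + Real.pi ^ 2 / h ^ 2 * σ ^ 2) / (3 * σ ^ 2)) 0 := by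
  set c := Real.pi / h with hc
  have hE : ∀ y : ℝ, HasDerivAt (fun y : ℝ => Real.exp (-(y ^ 2) / (2 * σ ^ 2)))
      (Real.exp (-(y ^ 2) / (2 * σ ^ 2)) * (-y / σ ^ 2)) y := by
    intro y
    have h1 := (((hasDerivAt_pow 2 y).neg).div_const (2 * σ ^ 2)).exp
    convert h1 using 1
    simp only [Pi.neg_apply]
    congr 1
    push_cast
    field_simp
    try ring
  have hl : ∀ y : ℝ, HasDerivAt (fun y : ℝ => c * y) c y := by
    intro y
    simpa using (hasDerivAt_id y).const_mul c
  have hS : ∀ y : ℝ, HasDerivAt (fun y : ℝ => Real.sinc (c * y)) (dsinc (c * y) * c) y := by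
    intro y
    exact (hasDerivAt_sinc (c * y)).comp y (hl y)
  have hR : ∀ y : ℝ, HasDerivAt (rsk h σ)
      (dsinc (c * y) * c * Real.exp (-(y ^ 2) / (2 * σ ^ 2)) +
        Real.sinc (c * y) * (Real.exp (-(y ^ 2) / (2 * σ ^ 2)) * (-y / σ ^ 2))) y := by
    intro y
    rw [rsk_eq h σ hh]
    exact (hS y).mul (hE y)
  have hd : deriv (rsk h σ) = fun y => dsinc (c * y) * c * Real.exp (-(y ^ 2) / (2 * σ ^ 2)) +
        Real.sinc (c * y) * (Real.exp (-(y ^ 2) / (2 * σ ^ 2)) * (-y / σ ^ 2)) := by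
    funext y
    exact (hR y).deriv
  constructor
  · have := hR 0
    simpa [dsinc] using this
  · rw [hd]
    have hD : HasDerivAt (fun y : ℝ => dsinc (c * y)) (-1 / 3 * c) 0 := by
      have h0 : HasDerivAt dsinc (-1 / 3) (c * 0) := by
        rw [mul_zero]; exact hasDerivAt_dsinc
      exact h0.comp (0 : ℝ) (hl 0)
    have hn : HasDerivAt (fun y : ℝ => -y / σ ^ 2) (-1 / σ ^ 2) 0 :=
      ((hasDerivAt_id (0 : ℝ)).neg).div_const (σ ^ 2)
    have key := ((hD.mul_const c).mul (hE 0)).add ((hS 0).mul ((hE 0).mul hn))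
    refine key.congr_deriv ?_
    simp [dsinc, hc]
    field_simp
end

section
/- For every natural number n, the function Φ_n(x) = He_n(√2·x)·exp(−x²/2), where He_n is the n-th probabilist's Hermite polynomial (defined by He_0 = 1 and He_{n+1}(x) = x·He_n(x) − He_n'(x)), satisfies the quantum harmonic oscillator eigenvalue equation −(1/2)·Φ_n''(x) + (x²/2)·Φ_n(x) = (n + 1/2)·Φ_n(x) for all x ∈ ℝ. -/
open Real Polynomial

/-- The `n`-th Hermite function `Φ_n(x) = He_n(√2·x)·exp(-x²/2)`, where `He_n` is the
probabilist's Hermite polynomial (`Polynomial.hermite`, satisfying `He_0 = 1` and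
`He_{n+1}(x) = x·He_n(x) - He_n'(x)`). -/
noncomputable def hermiteFun (n : ℕ) : ℝ → ℝ := fun x =>
  Polynomial.aeval (Real.sqrt 2 * x) (Polynomial.hermite n) * Real.exp (-(x ^ 2) / 2)

/-- Hermite's differential equation. -/
theorem hermite_ode (n : ℕ) : derivative (derivative (hermite n))
    = X * derivative (hermite n) - (n : ℤ[X]) * hermite n := by
  induction n with
  | zero => simp
  | succ n ih =>
    have h1 : derivative (hermite (n + 1)) = ((n : ℤ[X]) + 1) * hermite n := by
      rw [hermite_succ, derivative_sub, derivative_mul, derivative_X, ih]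
      ring
    have h2 : derivative (((n : ℤ[X]) + 1) * hermite n)
        = ((n : ℤ[X]) + 1) * derivative (hermite n) := by
      simp [derivative_mul]
    rw [h1, h2, hermite_succ]
    push_cast
    ring

/-- Derivative of a rescaled integer polynomial. -/
theorem hasDerivAt_aeval_scaled (p : ℤ[X]) (c x : ℝ) :
    HasDerivAt (fun x : ℝ => aeval (c * x) p) (c * aeval (c * x) (derivative p)) x := by
  have h := (p.hasDerivAt_aeval (c * x)).comp x ((hasDerivAt_id x).const_mul c)
  exact h.congr_deriv (by rw [mul_one, mul_comm])

/-- Derivative of the Gaussian factor. -/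
theorem hasDerivAt_gauss_factor (x : ℝ) :
    HasDerivAt (fun x : ℝ => Real.exp (-(x ^ 2) / 2)) (-x * Real.exp (-(x ^ 2) / 2)) x := by
  have h := (((hasDerivAt_id x).pow 2).neg.div_const 2).exp
  refine h.congr_deriv ?_
  simp only [Pi.neg_apply, Pi.pow_apply, id]
  push_cast
  ring

/-- The Hermite functions satisfy the quantum harmonic oscillator eigenvalue equation
`-(1/2)·Φ_n'' + (x²/2)·Φ_n = (n + 1/2)·Φ_n`. -/
theorem stmt_15 (n : ℕ) (x : ℝ) :
    -(1 / 2) * deriv (deriv (hermiteFun n)) x + x ^ 2 / 2 * hermiteFun n x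
      = ((n : ℝ) + 1 / 2) * hermiteFun n x := by
  have hd : deriv (hermiteFun n) = fun x =>
      √2 * aeval (√2 * x) (derivative (hermite n)) * Real.exp (-(x ^ 2) / 2)
        + aeval (√2 * x) (hermite n) * (-x * Real.exp (-(x ^ 2) / 2)) := by
    funext y
    exact ((hasDerivAt_aeval_scaled (hermite n) (√2) y).mul (hasDerivAt_gauss_factor y)).deriv
  have hg := hasDerivAt_gauss_factor x
  have h0 := hasDerivAt_aeval_scaled (hermite n) (√2) x
  have h1 := hasDerivAt_aeval_scaled (derivative (hermite n)) (√2) x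
  have hdd := (((h1.const_mul (√2)).mul hg).add (h0.mul ((hasDerivAt_neg x).mul hg))).deriv
  have hode := congrArg (fun p => aeval (√2 * x) p) (hermite_ode n)
  simp only [map_sub, map_mul, aeval_X, map_natCast] at hode
  have h2 : √2 * √2 = (2 : ℝ) := Real.mul_self_sqrt (by norm_num)
  rw [hd]
  refine (congrArg (fun t => -(1 / 2) * t + x ^ 2 / 2 * hermiteFun n x) hdd).trans ?_
  simp only [hermiteFun, hode, Pi.mul_apply]
  generalize Real.exp (-(x ^ 2) / 2) = e
  generalize (aeval (√2 * x)) (hermite n) = a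
  generalize (aeval (√2 * x)) (derivative (hermite n)) = b
  linear_combination (-(1 / 2) * e * (√2 * x * b - n * a)) * h2
end
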